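/- Let V be a symplectic vector space and C a coisotropic subspace of V. The indexed reduction ρ^C_•, sending (L, k) to (L^C, k + E^C(L)), is order-preserving for the sublevel partial order: for Lagrangians L₁, L₂ and k₁, k₂ ∈ ℕ, if d(L₁, L₂) + k₁ ≤ k₂ then d(L₁^C, L₂^C) + k₁ + E^C(L₁) ≤ k₂ + E^C(L₂). -/

import Mathlib

/-!
Put `I = Cᗮ ≤ C`. Indexed reduction is the composite of `(L, k) ↦ (L ⊓ C, k)` and
`(A, k) ↦ (A ⊔ I, k + dim (A ⊓ I))`, since `L ⊓ C ⊓ I = L ⊓ I`, and each factor is monotone.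
The first is monotone because `(L₁ ⊓ C) / (L₁ ⊓ L₂ ⊓ C)` embeds in `L₁ / (L₁ ⊓ L₂)`; the second
because `(A ⊓ B) ⊔ I ≤ (A ⊔ I) ⊓ (B ⊔ I)` and `A ⊓ B ⊓ I ≤ B ⊓ I`.
-/

open Module

section ChowDistance

variable {K V : Type*} [DivisionRing K] [AddCommGroup V] [Module K V]

/-- The Chow distance `d(L, L')`. On subspaces of different dimensions it is asymmetric: it is the
codimension of `L ⊓ L'` in `L`, provided `L` is finite-dimensional. -/
noncomputable def chowDist (L L' : Submodule K V) : ℤ :=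
  finrank K L - finrank K ↥(L ⊓ L')

/-- The reduction of `L` to the subquotient `C / I`, that is the image of `L ⊓ C` in `C / I`,
represented by the preimage of that image in `V`. Coisotropic reduction `L^C` is the case
`I = Cᗮ`. -/
def subquotientReduction (I C L : Submodule K V) : Submodule K V :=
  L ⊓ C ⊔ I

/-- The excess of `L` relative to `I`; `E^C(L)` is the case `I = Cᗮ`. -/
noncomputable def excess (I L : Submodule K V) : ℕ :=
  finrank K ↥(L ⊓ I)

lemma chowDist_inf_inf_le (C L₁ L₂ : Submodule K V) [FiniteDimensional K L₁] :
    chowDist (L₁ ⊓ C) (L₂ ⊓ C) ≤ chowDist L₁ L₂ := by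
  have hdim := Submodule.finrank_sup_add_finrank_inf_eq (L₁ ⊓ C) (L₁ ⊓ L₂)
  have hle : finrank K ↥((L₁ ⊓ C) ⊔ (L₁ ⊓ L₂)) ≤ finrank K L₁ :=
    Submodule.finrank_mono (sup_le inf_le_left inf_le_left)
  have hinf : (L₁ ⊓ C) ⊓ (L₂ ⊓ C) = (L₁ ⊓ C) ⊓ (L₁ ⊓ L₂) := by
    rw [← inf_inf_distrib_right, ← inf_inf_distrib_left, inf_comm C, inf_assoc]
  rw [chowDist, chowDist, hinf]
  lia

lemma chowDist_sup_sup_add_excess_le (I A B : Submodule K V)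
    [FiniteDimensional K I] [FiniteDimensional K A] :
    chowDist (A ⊔ I) (B ⊔ I) + excess I A ≤ chowDist A B + excess I B := by
  have hA := Submodule.finrank_sup_add_finrank_inf_eq A I
  have hAB := Submodule.finrank_sup_add_finrank_inf_eq (A ⊓ B) I
  have hsup : finrank K ↥((A ⊓ B) ⊔ I) ≤ finrank K ↥((A ⊔ I) ⊓ (B ⊔ I)) :=
    Submodule.finrank_mono <|
      le_inf (sup_le_sup_right inf_le_left I) (sup_le_sup_right inf_le_right I)
  have hinf : finrank K ↥(A ⊓ B ⊓ I) ≤ finrank K ↥(B ⊓ I) :=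
    Submodule.finrank_mono (inf_le_inf_right I inf_le_right)
  rw [chowDist, chowDist, excess, excess]
  lia

lemma excess_inf_of_le {I C : Submodule K V} (hIC : I ≤ C) (L : Submodule K V) :
    excess I (L ⊓ C) = excess I L := by
  rw [excess, excess, inf_assoc, inf_eq_right.2 hIC]

theorem indexed_reduction_monotone_general {I C L₁ L₂ : Submodule K V}
    [FiniteDimensional K I] [FiniteDimensional K L₁] (hIC : I ≤ C) {k₁ k₂ : ℤ}
    (h : chowDist L₁ L₂ + k₁ ≤ k₂) :
    chowDist (subquotientReduction I C L₁) (subquotientReduction I C L₂) + (k₁ + excess I L₁) ≤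
      k₂ + excess I L₂ := by
  have hsup := chowDist_sup_sup_add_excess_le I (L₁ ⊓ C) (L₂ ⊓ C)
  have hinf := chowDist_inf_inf_le C L₁ L₂
  rw [excess_inf_of_le hIC, excess_inf_of_le hIC] at hsup
  rw [subquotientReduction, subquotientReduction]
  linarith

end ChowDistance

/-- Indexed symplectic reduction `(L, k) ↦ (L^C, k + E^C(L))` is order-preserving for the
sublevel partial order `(L, k) ⪯ (L', k') ↔ d(L, L') + k ≤ k'` on the indexed Lagrangian
Grassmannian: if `d(L₁, L₂) + k₁ ≤ k₂` then
`d(L₁^C, L₂^C) + (k₁ + E^C(L₁)) ≤ k₂ + E^C(L₂)`.  Here `C` is coisotropic, the reduction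
`L^C` is represented by `(L ⊓ C) ⊔ Cᗮ`, the excess is `E^C(L) = dim (L ⊓ Cᗮ)`, and the Chow
distance is `d(L, L') = dim L - dim (L ⊓ L')`. -/
theorem indexed_reduction_monotone
    (V : Type*) [AddCommGroup V] [Module ℝ V] [FiniteDimensional ℝ V]
    (ω : LinearMap.BilinForm ℝ V) (hnd : ω.Nondegenerate) (halt : ω.IsAlt)
    (C : Submodule ℝ V) (hC : ω.orthogonal C ≤ C)
    (L₁ L₂ : Submodule ℝ V) (h₁ : ω.orthogonal L₁ = L₁) (h₂ : ω.orthogonal L₂ = L₂)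
    (k₁ k₂ : ℕ)
    (h : ((finrank ℝ L₁ : ℤ) - finrank ℝ ↥(L₁ ⊓ L₂)) + k₁ ≤ k₂) :
    ((finrank ℝ ↥((L₁ ⊓ C) ⊔ ω.orthogonal C) : ℤ) -
        finrank ℝ ↥(((L₁ ⊓ C) ⊔ ω.orthogonal C) ⊓ ((L₂ ⊓ C) ⊔ ω.orthogonal C))) +
      (k₁ + finrank ℝ ↥(L₁ ⊓ ω.orthogonal C)) ≤
        k₂ + finrank ℝ ↥(L₂ ⊓ ω.orthogonal C) :=
  indexed_reduction_monotone_general hC h
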